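/- Let R be the set of states reachable from the origin along trajectories contained in V*: R = { ξ ∈ ℝⁿ : ∃ T ≥ 0 and an input sequence u(0),…,u(T−1) such that the trajectory with x(0) = 0 satisfies x(t) ∈ V* for all t ∈ {0,…,T} and x(T) = ξ }. Then R is a subspace of ℝⁿ and R = V* ∩ S*. -/

import Mathlib

/-!
`S*` is the set of states reachable from the origin along trajectories that lie in `Ker C` before
the final time, and `V*` contains every state of `Ker C` that some input sends into `V*`. So if such
a trajectory ends in `V*`, running it backwards shows that all of its states lie in `V*`.
-/

section LinearSystem

variable {R X U : Type*} [Semiring R] [AddCommMonoid X] [Module R X] [AddCommMonoid U] [Module R U]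

/-- `(a, Im b)`-controlled invariance of `V`: from every state of `V`, some input makes the next
state stay in `V`. -/
def IsControlledInvariant (a : X →ₗ[R] X) (b : U →ₗ[R] X) (V : Submodule R X) : Prop :=
  ∀ v ∈ V, a v ∈ V ⊔ LinearMap.range b

/-- `(a, K)`-conditioned invariance of `S`, where `K` plays the role of `Ker C`: the states of `S`
with zero output are sent into `S` by `a`. -/
def IsConditionedInvariant (a : X →ₗ[R] X) (K S : Submodule R X) : Prop :=
  ∀ v ∈ S ⊓ K, a v ∈ S

/-- The state trajectory from the origin of `x (t + 1) = a (x t) + b (u t)` under the input `u`. -/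
def zeroStateResponse (a : X →ₗ[R] X) (b : U →ₗ[R] X) (u : ℕ → U) : ℕ → X
  | 0 => 0
  | t + 1 => a (zeroStateResponse a b u t) + b (u t)

/-- The set of states reachable from the origin along trajectories contained in `V`. Trajectories
are indexed by all of `ℕ`, but are only required to lie in `V` up to the final time `T`. -/
def reachableWithin (a : X →ₗ[R] X) (b : U →ₗ[R] X) (V : Submodule R X) : Set X :=
  {ξ | ∃ (T : ℕ) (x : ℕ → X) (u : ℕ → U),
    x 0 = 0 ∧ (∀ t, x (t + 1) = a (x t) + b (u t)) ∧ (∀ t ≤ T, x t ∈ V) ∧ x T = ξ}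

/-- The conditioned invariant subspace algorithm `S₀ = 0`, `Sₖ₊₁ = a (Sₖ ∩ K) + Im b`, whose limit
is the least `(a, K)`-conditioned invariant subspace containing `Im b`. -/
def conditionedSeq (a : X →ₗ[R] X) (b : U →ₗ[R] X) (K : Submodule R X) : ℕ → Submodule R X
  | 0 => ⊥
  | k + 1 => (conditionedSeq a b K k ⊓ K).map a ⊔ LinearMap.range b

variable {a : X →ₗ[R] X} {b : U →ₗ[R] X} {K V S : Submodule R X}

theorem eq_zeroStateResponse {x : ℕ → X} {u : ℕ → U} (h_zero : x 0 = 0)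
    (h_succ : ∀ t, x (t + 1) = a (x t) + b (u t)) : x = zeroStateResponse a b u := by
  funext t
  induction t with
  | zero => exact h_zero
  | succ t ih => rw [h_succ, ih, zeroStateResponse]

theorem zeroStateResponse_congr {u u' : ℕ → U} {T : ℕ} (h : ∀ t < T, u t = u' t) :
    zeroStateResponse a b u T = zeroStateResponse a b u' T := by
  induction T with
  | zero => rfl
  | succ T ih =>
    rw [zeroStateResponse, zeroStateResponse, h T T.lt_succ_self,
      ih fun t ht => h t (ht.trans T.lt_succ_self)]

theorem zeroStateResponse_update_of_le (u : ℕ → U) (w : U) {t T : ℕ} (h : t ≤ T) :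
    zeroStateResponse a b (Function.update u T w) t = zeroStateResponse a b u t :=
  zeroStateResponse_congr fun _ hs => Function.update_of_ne (hs.trans_le h).ne _ _

theorem mem_reachableWithin_iff {ξ : X} :
    ξ ∈ reachableWithin a b V ↔
      ∃ T u, (∀ t ≤ T, zeroStateResponse a b u t ∈ V) ∧ zeroStateResponse a b u T = ξ := by
  constructor
  · rintro ⟨T, x, u, h_zero, h_succ, h⟩
    rw [eq_zeroStateResponse h_zero h_succ] at h
    exact ⟨T, u, h⟩
  · rintro ⟨T, u, h⟩
    exact ⟨T, zeroStateResponse a b u, u, rfl, fun _ => rfl, h⟩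

theorem mem_conditionedSeq_iff {k : ℕ} {ξ : X} :
    ξ ∈ conditionedSeq a b K k ↔
      ∃ u, (∀ t < k, zeroStateResponse a b u t ∈ K) ∧ zeroStateResponse a b u k = ξ := by
  induction k generalizing ξ with
  | zero => simp [conditionedSeq, zeroStateResponse, eq_comm]
  | succ k ih =>
    constructor
    · intro hξ
      obtain ⟨_, ⟨v, ⟨hv, hvK⟩, rfl⟩, _, ⟨w, rfl⟩, rfl⟩ := Submodule.mem_sup.1 hξ
      obtain ⟨u, huK, rfl⟩ := ih.1 hv
      refine ⟨Function.update u k w, fun t ht => ?_, ?_⟩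
      · rw [zeroStateResponse_update_of_le u w (Nat.lt_succ_iff.1 ht)]
        obtain ht | rfl := Nat.lt_succ_iff_lt_or_eq.1 ht
        exacts [huK t ht, hvK]
      · rw [zeroStateResponse, zeroStateResponse_update_of_le u w le_rfl, Function.update_self]
    · rintro ⟨u, huK, rfl⟩
      have hk : zeroStateResponse a b u k ∈ conditionedSeq a b K k :=
        ih.2 ⟨u, fun t ht => huK t (ht.trans k.lt_succ_self), rfl⟩
      exact Submodule.add_mem_sup (Submodule.mem_map_of_mem ⟨hk, huK k k.lt_succ_self⟩) ⟨u k, rfl⟩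

theorem conditionedSeq_mono : Monotone (conditionedSeq a b K) := by
  refine monotone_nat_of_le_succ fun k => ?_
  induction k with
  | zero => exact bot_le
  | succ k ih => exact sup_le_sup_right (Submodule.map_mono (inf_le_inf_right _ ih)) _

theorem mem_iSup_conditionedSeq_iff {ξ : X} :
    ξ ∈ ⨆ k, conditionedSeq a b K k ↔ ∃ k, ξ ∈ conditionedSeq a b K k :=
  Submodule.mem_iSup_of_directed _ conditionedSeq_mono.directed_le

theorem isConditionedInvariant_iSup_conditionedSeq :
    IsConditionedInvariant a K (⨆ k, conditionedSeq a b K k) := by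
  rintro v ⟨hv, hvK⟩
  obtain ⟨k, hk⟩ := mem_iSup_conditionedSeq_iff.1 hv
  exact mem_iSup_conditionedSeq_iff.2
    ⟨k + 1, Submodule.mem_sup_left (Submodule.mem_map_of_mem ⟨hk, hvK⟩)⟩

theorem IsConditionedInvariant.conditionedSeq_le (hS : IsConditionedInvariant a K S)
    (hbS : LinearMap.range b ≤ S) (k : ℕ) : conditionedSeq a b K k ≤ S := by
  induction k with
  | zero => exact bot_le
  | succ k ih =>
    exact sup_le (Submodule.map_le_iff_le_comap.2 fun v hv => hS v ⟨ih hv.1, hv.2⟩) hbS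

theorem eq_iSup_conditionedSeq
    (hS : IsLeast {S | IsConditionedInvariant a K S ∧ LinearMap.range b ≤ S} S) :
    S = ⨆ k, conditionedSeq a b K k :=
  le_antisymm
    (hS.2 ⟨isConditionedInvariant_iSup_conditionedSeq,
      le_sup_right.trans (le_iSup (conditionedSeq a b K) 1)⟩)
    (iSup_le (hS.1.1.conditionedSeq_le hS.1.2))

-- The left-hand side is itself controlled invariant, because it contains `V`.
theorem inf_comap_le_of_isGreatest
    (hV : IsGreatest {V | IsControlledInvariant a b V ∧ V ≤ K} V) :
    K ⊓ (V ⊔ LinearMap.range b).comap a ≤ V := by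
  have hV_le : V ≤ K ⊓ (V ⊔ LinearMap.range b).comap a := le_inf hV.1.2 hV.1.1
  exact hV.2 ⟨fun v hv => sup_le_sup_right hV_le _ hv.2, inf_le_left⟩

end LinearSystem

section Ring

variable {R X U : Type*} [Ring R] [AddCommGroup X] [Module R X] [AddCommGroup U] [Module R U]
  {a : X →ₗ[R] X} {b : U →ₗ[R] X} {K V S : Submodule R X}

theorem zeroStateResponse_mem_of_isGreatest
    (hV : IsGreatest {V | IsControlledInvariant a b V ∧ V ≤ K} V) {u : ℕ → U} {T : ℕ}
    (hK : ∀ t < T, zeroStateResponse a b u t ∈ K) (hT : zeroStateResponse a b u T ∈ V) :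
    ∀ t ≤ T, zeroStateResponse a b u t ∈ V := by
  intro t ht
  induction ht using Nat.decreasingInduction with
  | self => exact hT
  | of_succ t ht ih =>
    have h_next : a (zeroStateResponse a b u t) ∈ V ⊔ LinearMap.range b :=
      (Submodule.add_mem_iff_left _ (Submodule.mem_sup_right (LinearMap.mem_range_self b (u t)))).1
        (Submodule.mem_sup_left ih)
    exact inf_comap_le_of_isGreatest hV ⟨hK t ht, h_next⟩

theorem stmt_14_general
    (hV : IsGreatest {V | IsControlledInvariant a b V ∧ V ≤ K} V)
    (hS : IsLeast {S | IsConditionedInvariant a K S ∧ LinearMap.range b ≤ S} S) :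
    reachableWithin a b V = ((V ⊓ S : Submodule R X) : Set X) := by
  ext ξ
  rw [mem_reachableWithin_iff, SetLike.mem_coe, Submodule.mem_inf, eq_iSup_conditionedSeq hS,
    mem_iSup_conditionedSeq_iff]
  simp only [mem_conditionedSeq_iff]
  constructor
  · rintro ⟨T, u, huV, rfl⟩
    exact ⟨huV T le_rfl, T, u, fun t ht => hV.1.2 (huV t ht.le), rfl⟩
  · rintro ⟨hξV, T, u, huK, rfl⟩
    exact ⟨T, u, zeroStateResponse_mem_of_isGreatest hV huK hξV, rfl⟩

end Ring

/-- the set R of states reachable from the origin along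
trajectories contained in V* is a subspace and equals R* = V* ∩ S*. -/
theorem stmt_14
    (n m p : ℕ)
    (A : Matrix (Fin n) (Fin n) ℝ) (B : Matrix (Fin n) (Fin m) ℝ)
    (C : Matrix (Fin p) (Fin n) ℝ)
    -- V* : largest (A, Im B)-controlled invariant subspace contained in Ker C
    (Vstar : Submodule ℝ (Fin n → ℝ))
    (hVinv : ∀ v ∈ Vstar, A.mulVec v ∈ Vstar ⊔ LinearMap.range B.mulVecLin)
    (hVker : Vstar ≤ LinearMap.ker C.mulVecLin)
    (hVmax : ∀ W : Submodule ℝ (Fin n → ℝ),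
      (∀ v ∈ W, A.mulVec v ∈ W ⊔ LinearMap.range B.mulVecLin) →
      W ≤ LinearMap.ker C.mulVecLin → W ≤ Vstar)
    -- S* : smallest (A, Ker C)-conditioned invariant subspace containing Im B
    (Sstar : Submodule ℝ (Fin n → ℝ))
    (hSinv : ∀ v ∈ Sstar ⊓ LinearMap.ker C.mulVecLin, A.mulVec v ∈ Sstar)
    (hSim : LinearMap.range B.mulVecLin ≤ Sstar)
    (hSmin : ∀ W : Submodule ℝ (Fin n → ℝ),
      (∀ v ∈ W ⊓ LinearMap.ker C.mulVecLin, A.mulVec v ∈ W) →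
      LinearMap.range B.mulVecLin ≤ W → Sstar ≤ W) :
    -- R is a subspace and R = V* ∩ S* (the set equality with the submodule
    -- V* ⊓ S* expresses both claims)
    {ξ : Fin n → ℝ |
      ∃ (T : ℕ) (x : ℕ → Fin n → ℝ) (u : ℕ → Fin m → ℝ),
        x 0 = 0 ∧
        (∀ t, x (t + 1) = A.mulVec (x t) + B.mulVec (u t)) ∧
        (∀ t ≤ T, x t ∈ Vstar) ∧
        x T = ξ}
      = ((Vstar ⊓ Sstar : Submodule ℝ (Fin n → ℝ)) : Set (Fin n → ℝ)) :=
  stmt_14_general (a := A.mulVecLin) (b := B.mulVecLin)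
    ⟨⟨hVinv, hVker⟩, fun W hW => hVmax W hW.1 hW.2⟩ ⟨⟨hSinv, hSim⟩, fun W hW => hSmin W hW.1 hW.2⟩
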